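/- arXiv:2602.11041 — 3 statements merged into one kernel-verified Lean document; each statement's English description precedes it below -/
import Mathlib

section
/- Let n ≥ 2 and q ≥ 1 be integers, let n_0, …, n_{q−1} be integers with 1 ≤ n_i < n for all i, let s_0, …, s_{q−1} be positive reals with ∑_{i=0}^{q−1} s_i·n_i² > n², and let A ≥ 0 be real. Let ω₀ be the real number with n^{ω₀} = ∑_{i=0}^{q−1} s_i·n_i^{ω₀}, and assume ω₀ < 3. Let N₀ be an integer with N₀ > n·n_i/(n − n_i) for all i. Suppose T : ℕ → ℝ satisfies T(N) = 2N³ − N² for all 1 ≤ N < N₀ and T(N) ≤ ∑_{i=0}^{q−1} s_i·T(⌈N/n⌉·n_i) + A·⌈N/n⌉² for all N ≥ N₀. Then there exists a constant C > 0 such that T(N) ≤ C·N^{ω₀} for all N ≥ 1. -/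
/-!
Dividing `n ^ ω₀ = ∑ i, s i * nn i ^ ω₀` by `n ^ ω₀` shows that `ω₀` is the Akra–Bazzi exponent of
the recurrence, with ratios `b i = nn i / n`; rounding moves each argument by at most `nn i`.
Since `∑ i, s i * b i ^ p` is antitone in `p`, the hypothesis on the squares says `2 < ω₀`, so the
overhead `A * N ^ 2` is of smaller order than `N ^ ω₀` and the Akra–Bazzi bound collapses to
`N ^ ω₀`. As that theorem is about exact recurrences of positive functions, it is applied to a
function which dominates `T` and satisfies the recurrence with equality.
-/

open Filter Asymptotics

section AkraBazzi

variable {ι : Type*} [Fintype ι] {T : ℕ → ℝ} {g : ℝ → ℝ} {a b : ι → ℝ} {r : ι → ℕ → ℕ} {p : ℝ}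

lemma antitone_sum_mul_rpow (ha : ∀ i, 0 ≤ a i) (hb : ∀ i, 0 < b i) (hb_le : ∀ i, b i ≤ 1) :
    Antitone fun p : ℝ ↦ ∑ i, a i * b i ^ p := fun _ _ hpq ↦
  Finset.sum_le_sum fun i _ ↦
    mul_le_mul_of_nonneg_left (Real.rpow_le_rpow_of_exponent_ge (hb i) (hb_le i) hpq) (ha i)

lemma akraBazziRecurrence_p_eq [Nonempty ι] (R : AkraBazziRecurrence T g a b r)
    (hp : ∑ i, a i * b i ^ p = 1) : AkraBazziRecurrence.p a b = p :=
  R.injective_sumCoeffsExp (R.sumCoeffsExp_p_eq_one.trans hp.symm)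

theorem isBigO_rpow_of_akraBazziRecurrence [Nonempty ι] (R : AkraBazziRecurrence T g a b r)
    (hp : ∑ i, a i * b i ^ p = 1) (hg : Summable fun u : ℕ ↦ g u / (u : ℝ) ^ (p + 1)) :
    T =O[atTop] fun N : ℕ ↦ (N : ℝ) ^ p := by
  have hterm (u : ℕ) : 0 ≤ g u / (u : ℝ) ^ (p + 1) :=
    div_nonneg (R.g_nonneg u u.cast_nonneg) (by positivity)
  refine R.isBigO_asympBound.trans (IsBigO.of_bound (1 + ∑' u : ℕ, g u / (u : ℝ) ^ (p + 1))
    (.of_forall fun N ↦ ?_))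
  have hsum : 0 ≤ ∑ u ∈ Finset.range N, g u / (u : ℝ) ^ (p + 1) :=
    Finset.sum_nonneg fun u _ ↦ hterm u
  rw [AkraBazziRecurrence.asympBound_def', akraBazziRecurrence_p_eq R hp,
    Real.norm_of_nonneg (by positivity), Real.norm_of_nonneg (by positivity), mul_comm]
  gcongr
  exact hg.sum_le_tsum _ fun u _ ↦ hterm u

/-- The solution of the recurrence `U N = ∑ i, a i * U (r i N) + f N` for `n₀ ≤ N` whose values
below `n₀` are those of `T`, raised to at least `1`. It dominates every `T` satisfying the
recurrence with `≤`. The test `r i N < N` only ensures termination. -/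
noncomputable def recurrenceMajorant (T : ℕ → ℝ) (a : ι → ℝ) (r : ι → ℕ → ℕ) (f : ℕ → ℝ)
    (n₀ N : ℕ) : ℝ :=
  if N < n₀ then max 1 (T N)
  else ∑ i, a i * (if r i N < N then recurrenceMajorant T a r f n₀ (r i N) else 0) + f N

variable {f : ℕ → ℝ} {n₀ : ℕ}

lemma recurrenceMajorant_pos_of_lt {N : ℕ} (hN : N < n₀) :
    0 < recurrenceMajorant T a r f n₀ N := by
  rw [recurrenceMajorant, if_pos hN]
  positivity

lemma recurrenceMajorant_of_le (hr : ∀ i N, n₀ ≤ N → r i N < N) {N : ℕ} (hN : n₀ ≤ N) :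
    recurrenceMajorant T a r f n₀ N =
      ∑ i, a i * recurrenceMajorant T a r f n₀ (r i N) + f N := by
  rw [recurrenceMajorant, if_neg hN.not_gt]
  simp only [hr _ N hN, if_true]

lemma le_recurrenceMajorant (ha : ∀ i, 0 ≤ a i) (hr : ∀ i N, n₀ ≤ N → r i N < N)
    (hT : ∀ N, n₀ ≤ N → T N ≤ ∑ i, a i * T (r i N) + f N) (N : ℕ) :
    T N ≤ recurrenceMajorant T a r f n₀ N := by
  induction N using Nat.strong_induction_on with
  | _ N ih =>
    rcases lt_or_ge N n₀ with hN | hN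
    · rw [recurrenceMajorant, if_pos hN]
      exact le_max_right _ _
    · rw [recurrenceMajorant_of_le hr hN]
      refine (hT N hN).trans ?_
      gcongr with i
      · exact ha i
      · exact ih _ (hr i N hN)

lemma eventually_lt_of_sub_mul_isLittleO {r : ℕ → ℕ} {b : ℝ} (hb : b < 1)
    (hr : (fun N ↦ (r N : ℝ) - b * N) =o[atTop] fun N ↦ (N : ℝ)) :
    ∀ᶠ N in atTop, r N < N := by
  filter_upwards [hr.bound (c := (1 - b) / 2) (by linarith), eventually_gt_atTop 0] with N hN hpos
  have hdist : (r N : ℝ) - b * N ≤ (1 - b) / 2 * N := by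
    simpa only [Real.norm_natCast] using (le_abs_self _).trans hN
  have hslack : 0 < (1 - b) / 2 * N := by
    have : 0 < 1 - b := sub_pos.2 hb
    positivity
  exact_mod_cast (by linarith : (r N : ℝ) < N)

theorem exists_forall_le_mul_rpow_of_akraBazzi_le (ha : ∀ i, 0 < a i) (hb : ∀ i, 0 < b i)
    (hb_lt : ∀ i, b i < 1) (hg_nonneg : ∀ x ≥ 0, 0 ≤ g x)
    (hg_poly : AkraBazziRecurrence.GrowsPolynomially g)
    (hr : ∀ i, (fun N ↦ (r i N : ℝ) - b i * N) =o[atTop] fun N ↦ N / Real.log N ^ 2)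
    (hp : ∑ i, a i * b i ^ p = 1) (hg : Summable fun u : ℕ ↦ g u / (u : ℝ) ^ (p + 1))
    (hT : ∀ᶠ N in atTop, T N ≤ ∑ i, a i * T (r i N) + g N) :
    ∃ C : ℝ, 0 < C ∧ ∀ N : ℕ, 1 ≤ N → T N ≤ C * (N : ℝ) ^ p := by
  have : Nonempty ι := by
    by_contra hι
    simp only [not_nonempty_iff.1 hι, Finset.univ_eq_empty, Finset.sum_empty, zero_ne_one] at hp
  have hr_lt : ∀ᶠ N in atTop, ∀ i, r i N < N := eventually_all.2 fun i ↦
    eventually_lt_of_sub_mul_isLittleO (hb_lt i)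
      ((hr i).trans AkraBazziRecurrence.isLittleO_self_div_log_id)
  obtain ⟨n₀, hn₀⟩ := eventually_atTop.1 ((hT.and hr_lt).and (eventually_gt_atTop 0))
  have hr_lt' (i : ι) (N : ℕ) (hN : n₀ ≤ N) : r i N < N := (hn₀ N hN).1.2 i
  have R : AkraBazziRecurrence (recurrenceMajorant T a r (fun N ↦ g N) n₀) g a b r :=
    { n₀ := n₀
      n₀_gt_zero := (hn₀ n₀ le_rfl).2
      a_pos := ha
      b_pos := hb
      b_lt_one := hb_lt
      g_nonneg := hg_nonneg
      g_grows_poly := hg_poly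
      h_rec := fun _ ↦ recurrenceMajorant_of_le hr_lt'
      T_gt_zero' := fun _ ↦ recurrenceMajorant_pos_of_lt
      r_lt_n := hr_lt'
      dist_r_b := hr }
  obtain ⟨C, hC, hbound⟩ := bound_of_isBigO_nat_atTop (isBigO_rpow_of_akraBazziRecurrence R hp hg)
  refine ⟨C, hC, fun N hN ↦ ?_⟩
  have hpow : 0 < (N : ℝ) ^ p := Real.rpow_pos_of_pos (by exact_mod_cast hN) p
  calc T N ≤ recurrenceMajorant T a r (fun N ↦ g N) n₀ N :=
        le_recurrenceMajorant (fun i ↦ (ha i).le) hr_lt' (fun N hN ↦ (hn₀ N hN).1.1) N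
    _ ≤ ‖recurrenceMajorant T a r (fun N ↦ g N) n₀ N‖ := Real.le_norm_self _
    _ ≤ C * ‖(N : ℝ) ^ p‖ := hbound hpow.ne'
    _ = C * (N : ℝ) ^ p := by rw [Real.norm_of_nonneg hpow.le]

end AkraBazzi

lemma isLittleO_one_natCast_div_log_sq :
    (fun _ : ℕ ↦ (1 : ℝ)) =o[atTop] fun N : ℕ ↦ (N : ℝ) / Real.log N ^ 2 := by
  have hlog : ∀ᶠ x : ℝ in atTop, Real.log x ^ 2 ≠ 0 := by
    filter_upwards [Real.tendsto_log_atTop.eventually_ne_atTop 0] with x hx using pow_ne_zero 2 hx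
  have hreal : (fun _ : ℝ ↦ (1 : ℝ)) =o[atTop] fun x ↦ x / Real.log x ^ 2 := by
    simpa only [id_eq, div_eq_mul_inv] using (Real.isLittleO_pow_log_id_atTop (n := 2)).mul_isBigO
      (isBigO_refl (fun x ↦ (Real.log x ^ 2)⁻¹) atTop) |>.congr'
        (hlog.mono fun x hx ↦ mul_inv_cancel₀ hx) .rfl
  exact hreal.natCast_atTop

lemma mul_ceilDiv_le_add (N n : ℕ) : n * (N ⌈/⌉ n) ≤ N + n := by
  rw [Nat.ceilDiv_eq_add_pred_div]
  exact (Nat.mul_div_le _ _).trans (Nat.sub_le _ _)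

lemma ceilDiv_le_self {n : ℕ} (hn : 0 < n) (N : ℕ) : N ⌈/⌉ n ≤ N :=
  (ceilDiv_le_iff_le_mul hn).2 (Nat.le_mul_of_pos_left N hn)

lemma ceilDiv_mul_sub_isLittleO {n : ℕ} (hn : 0 < n) (m : ℕ) :
    (fun N : ℕ ↦ ((N ⌈/⌉ n * m : ℕ) : ℝ) - m / n * N) =o[atTop]
      fun N ↦ (N : ℝ) / Real.log N ^ 2 := by
  refine (IsBigO.of_bound m (.of_forall fun N ↦ ?_)).trans_isLittleO
    isLittleO_one_natCast_div_log_sq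
  have hn' : (0 : ℝ) < n := by exact_mod_cast hn
  have hlower : (N : ℝ) ≤ n * (N ⌈/⌉ n : ℕ) := by exact_mod_cast le_smul_ceilDiv (b := N) hn
  have hupper : (n : ℝ) * (N ⌈/⌉ n : ℕ) ≤ N + n := by exact_mod_cast mul_ceilDiv_le_add N n
  have hdist : ((N ⌈/⌉ n * m : ℕ) : ℝ) - m / n * N = m / n * (n * (N ⌈/⌉ n : ℕ) - N) := by
    push_cast
    field_simp
  calc ‖((N ⌈/⌉ n * m : ℕ) : ℝ) - m / n * N‖
      = m / n * (n * (N ⌈/⌉ n : ℕ) - N) := by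
        rw [hdist, Real.norm_of_nonneg (mul_nonneg (by positivity) (sub_nonneg.2 hlower))]
    _ ≤ m / n * n := by gcongr; linarith
    _ = m * ‖(1 : ℝ)‖ := by rw [norm_one, mul_one, div_mul_cancel₀ _ hn'.ne']

lemma summable_mul_pow_div_rpow_add_one (A : ℝ) {d : ℕ} {p : ℝ} (hdp : d < p) :
    Summable fun u : ℕ ↦ A * (u : ℝ) ^ d / (u : ℝ) ^ (p + 1) := by
  have hexp : (d : ℝ) - (p + 1) < -1 := by linarith
  refine ((Real.summable_nat_rpow.2 hexp).mul_left A).congr fun u ↦ ?_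
  rw [Real.rpow_sub' u.cast_nonneg (by linarith), Real.rpow_natCast, mul_div_assoc]

lemma sum_mul_div_rpow {ι : Type*} [Fintype ι] {n : ℝ} (hn : 0 ≤ n) {m : ι → ℝ}
    (hm : ∀ i, 0 ≤ m i) (s : ι → ℝ) (p : ℝ) :
    ∑ i, s i * (m i / n) ^ p = (∑ i, s i * m i ^ p) / n ^ p := by
  rw [Finset.sum_div]
  exact Finset.sum_congr rfl fun i _ ↦ by rw [Real.div_rpow (hm i) hn, mul_div_assoc]

theorem structured_recurrence_bound_general {ι : Type*} [Fintype ι] {n d : ℕ} {nn : ι → ℕ}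
    (hnn : ∀ i, 1 ≤ nn i ∧ nn i < n) {s : ι → ℝ} (hs : ∀ i, 0 < s i)
    (hbig : (n : ℝ) ^ d < ∑ i, s i * (nn i : ℝ) ^ d) {A ω₀ : ℝ}
    (hω : (n : ℝ) ^ ω₀ = ∑ i, s i * (nn i : ℝ) ^ ω₀) {T : ℕ → ℝ}
    (hrec : ∀ᶠ N in atTop, T N ≤ ∑ i, s i * T (N ⌈/⌉ n * nn i) + A * ((N ⌈/⌉ n : ℕ) : ℝ) ^ d) :
    ∃ C : ℝ, 0 < C ∧ ∀ N : ℕ, 1 ≤ N → T N ≤ C * (N : ℝ) ^ ω₀ := by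
  have hn : 0 < n := by
    obtain ⟨i, -, -⟩ := Finset.exists_ne_zero_of_sum_ne_zero
      ((by positivity : (0 : ℝ) ≤ (n : ℝ) ^ d).trans_lt hbig).ne'
    exact (hnn i).1.trans (hnn i).2.le
  have hn' : (0 : ℝ) < n := by exact_mod_cast hn
  have hb (i : ι) : 0 < (nn i : ℝ) / n := div_pos (by exact_mod_cast (hnn i).1) hn'
  have hb_lt (i : ι) : (nn i : ℝ) / n < 1 := (div_lt_one hn').2 (by exact_mod_cast (hnn i).2)
  have hratio := sum_mul_div_rpow hn'.le (fun i ↦ (nn i).cast_nonneg) s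
  have hsum_ω : ∑ i, s i * ((nn i : ℝ) / n) ^ ω₀ = 1 := by
    rw [hratio, ← hω, div_self (by positivity)]
  have hsum_d : 1 < ∑ i, s i * ((nn i : ℝ) / n) ^ (d : ℝ) := by
    rw [hratio, one_lt_div (by positivity)]
    exact_mod_cast hbig
  have hdω : (d : ℝ) < ω₀ :=
    (antitone_sum_mul_rpow (fun i ↦ (hs i).le) hb fun i ↦ (hb_lt i).le).reflect_lt
      (hsum_ω.trans_lt hsum_d)
  refine exists_forall_le_mul_rpow_of_akraBazzi_le (g := fun x ↦ |A| * x ^ d) hs hb hb_lt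
    (fun x hx ↦ by positivity) (AkraBazziRecurrence.growsPolynomially_pow d).const_mul
    (fun i ↦ ceilDiv_mul_sub_isLittleO hn (nn i)) hsum_ω
    (summable_mul_pow_div_rpow_add_one |A| hdω) (hrec.mono fun N hN ↦ hN.trans ?_)
  gcongr
  · exact le_abs_self A
  · exact ceilDiv_le_self hn N

/-- the operation-count recurrence of the recursive algorithm
obtained from a restriction `⟨n,n,n⟩ ≤ ⊕ᵢ sᵢ ⊙ ⟨nᵢ,nᵢ,nᵢ⟩`.
Here `⌈N/n⌉` is written as the natural number `(N + n - 1) / n`. -/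
theorem structured_recurrence_bound (n q : ℕ) (hn : 2 ≤ n) (hq : 1 ≤ q)
    (nn : Fin q → ℕ) (hnn : ∀ i, 1 ≤ nn i ∧ nn i < n)
    (s : Fin q → ℝ) (hs : ∀ i, 0 < s i)
    (hbig : (n : ℝ) ^ 2 < ∑ i, s i * (nn i : ℝ) ^ 2)
    (A : ℝ) (hA : 0 ≤ A)
    (ω₀ : ℝ) (hω : (n : ℝ) ^ ω₀ = ∑ i, s i * (nn i : ℝ) ^ ω₀) (hω₃ : ω₀ < 3)
    (N₀ : ℕ) (hN₀ : ∀ i, (N₀ : ℝ) > (n : ℝ) * (nn i : ℝ) / ((n : ℝ) - (nn i : ℝ)))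
    (T : ℕ → ℝ)
    (hbase : ∀ N : ℕ, 1 ≤ N → N < N₀ → T N = 2 * (N : ℝ) ^ 3 - (N : ℝ) ^ 2)
    (hrec : ∀ N : ℕ, N₀ ≤ N →
      T N ≤ (∑ i, s i * T (((N + n - 1) / n) * nn i))
              + A * (((N + n - 1) / n : ℕ) : ℝ) ^ 2) :
    ∃ C : ℝ, 0 < C ∧ ∀ N : ℕ, 1 ≤ N → T N ≤ C * (N : ℝ) ^ ω₀ :=
  structured_recurrence_bound_general hnn hs hbig hω (eventually_atTop.2 ⟨N₀, hrec⟩)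
end

section
/- Let K be a field. Then the matrix multiplication tensor ⟨2,2,2⟩ is a restriction of the unit tensor ⟨7⟩, witnessed by Strassen's decomposition of ⟨2,2,2⟩ into a sum of 7 rank-one tensors. -/
/-!
A restriction of `⟨r⟩` is the same as a sum of `r` rank-one tensors: the images of the standard
basis vectors under the three maps are the factors. Strassen's decomposition of `⟨2,2,2⟩` is
invariant under cyclically permuting the three tensor positions. It has one fixed summand and two
orbits of three summands, so its `21` factors are the same seven combinations of matrix units,
rearranged.
-/

open TensorProduct

noncomputable section

section Defs

variable (K : Type) [Field K]
variable {U₁ U₂ U₃ V₁ V₂ V₃ W₁ W₂ W₃ : Type}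
variable [AddCommGroup U₁] [Module K U₁] [AddCommGroup U₂] [Module K U₂]
  [AddCommGroup U₃] [Module K U₃]
variable [AddCommGroup V₁] [Module K V₁] [AddCommGroup V₂] [Module K V₂]
  [AddCommGroup V₃] [Module K V₃]
variable [AddCommGroup W₁] [Module K W₁] [AddCommGroup W₂] [Module K W₂]
  [AddCommGroup W₃] [Module K W₃]

/-- `T` is a restriction of `T'` (written `T ≤ T'` in the paper): there are linear maps
`φᵢ` with `T = (φ₁ ⊗ φ₂ ⊗ φ₃)(T')`. -/
def IsRestriction (T : U₁ ⊗[K] (U₂ ⊗[K] U₃)) (T' : V₁ ⊗[K] (V₂ ⊗[K] V₃)) : Prop :=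
  ∃ (φ₁ : V₁ →ₗ[K] U₁) (φ₂ : V₂ →ₗ[K] U₂) (φ₃ : V₃ →ₗ[K] U₃),
    T = TensorProduct.map φ₁ (TensorProduct.map φ₂ φ₃) T'

/-- Direct sum of two order-3 tensors, via the canonical inclusions. -/
def dsum (T₁ : U₁ ⊗[K] (U₂ ⊗[K] U₃)) (T₂ : W₁ ⊗[K] (W₂ ⊗[K] W₃)) :
    (U₁ × W₁) ⊗[K] ((U₂ × W₂) ⊗[K] (U₃ × W₃)) :=
  TensorProduct.map (LinearMap.inl K U₁ W₁)
      (TensorProduct.map (LinearMap.inl K U₂ W₂) (LinearMap.inl K U₃ W₃)) T₁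
    + TensorProduct.map (LinearMap.inr K U₁ W₁)
      (TensorProduct.map (LinearMap.inr K U₂ W₂) (LinearMap.inr K U₃ W₃)) T₂

/-- Kronecker product of two order-3 tensors, via the canonical reassociation. -/
def kron (T₁ : U₁ ⊗[K] (U₂ ⊗[K] U₃)) (T₂ : W₁ ⊗[K] (W₂ ⊗[K] W₃)) :
    (U₁ ⊗[K] W₁) ⊗[K] ((U₂ ⊗[K] W₂) ⊗[K] (U₃ ⊗[K] W₃)) :=
  (TensorProduct.congr (LinearEquiv.refl K (U₁ ⊗[K] W₁))
      (TensorProduct.tensorTensorTensorComm K U₂ U₃ W₂ W₃))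
    ((TensorProduct.tensorTensorTensorComm K U₁ (U₂ ⊗[K] U₃) W₁ (W₂ ⊗[K] W₃))
      (T₁ ⊗ₜ[K] T₂))

/-- `k ⊙ T`: the direct sum of `k` copies of `T`, via the canonical inclusions
into the `k`-fold products. -/
def copies (k : ℕ) (T : U₁ ⊗[K] (U₂ ⊗[K] U₃)) :
    (Fin k → U₁) ⊗[K] ((Fin k → U₂) ⊗[K] (Fin k → U₃)) :=
  ∑ i : Fin k,
    TensorProduct.map (LinearMap.single K (fun _ : Fin k => U₁) i)
      (TensorProduct.map (LinearMap.single K (fun _ : Fin k => U₂) i)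
        (LinearMap.single K (fun _ : Fin k => U₃) i)) T

end Defs

/-- The matrix multiplication tensor `⟨n,m,p⟩`. -/
def matMulTensor (K : Type) [Field K] (n m p : ℕ) :
    Matrix (Fin n) (Fin m) K ⊗[K]
      (Matrix (Fin m) (Fin p) K ⊗[K] Matrix (Fin p) (Fin n) K) :=
  ∑ i : Fin n, ∑ j : Fin m, ∑ k : Fin p,
    Matrix.single i j (1 : K) ⊗ₜ[K]
      (Matrix.single j k (1 : K) ⊗ₜ[K] Matrix.single k i (1 : K))

/-- The unit tensor `⟨r⟩`. -/
def unitTensor (K : Type) [Field K] (r : ℕ) :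
    (Fin r → K) ⊗[K] ((Fin r → K) ⊗[K] (Fin r → K)) :=
  ∑ i : Fin r,
    Pi.single i (1 : K) ⊗ₜ[K] (Pi.single i (1 : K) ⊗ₜ[K] Pi.single i (1 : K))

end

section RankOne

variable {R ι M₁ M₂ M₃ : Type*} [CommSemiring R] [Fintype ι] [DecidableEq ι]
  [AddCommMonoid M₁] [Module R M₁] [AddCommMonoid M₂] [Module R M₂]
  [AddCommMonoid M₃] [Module R M₃]

theorem map_sum_single_tmul (φ₁ : (ι → R) →ₗ[R] M₁) (φ₂ : (ι → R) →ₗ[R] M₂)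
    (φ₃ : (ι → R) →ₗ[R] M₃) :
    TensorProduct.map φ₁ (TensorProduct.map φ₂ φ₃)
        (∑ i, Pi.single i 1 ⊗ₜ[R] (Pi.single i 1 ⊗ₜ[R] Pi.single i 1)) =
      ∑ i, φ₁ (Pi.single i 1) ⊗ₜ[R] (φ₂ (Pi.single i 1) ⊗ₜ[R] φ₃ (Pi.single i 1)) := by
  simp only [map_sum, map_tmul]

theorem exists_eq_map_sum_single_tmul_iff (T : M₁ ⊗[R] (M₂ ⊗[R] M₃)) :
    (∃ (φ₁ : (ι → R) →ₗ[R] M₁) (φ₂ : (ι → R) →ₗ[R] M₂) (φ₃ : (ι → R) →ₗ[R] M₃),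
      T = TensorProduct.map φ₁ (TensorProduct.map φ₂ φ₃)
        (∑ i, Pi.single i 1 ⊗ₜ[R] (Pi.single i 1 ⊗ₜ[R] Pi.single i 1))) ↔
    ∃ (a : ι → M₁) (b : ι → M₂) (c : ι → M₃), T = ∑ i, a i ⊗ₜ[R] (b i ⊗ₜ[R] c i) := by
  constructor
  · rintro ⟨φ₁, φ₂, φ₃, rfl⟩
    exact ⟨_, _, _, map_sum_single_tmul φ₁ φ₂ φ₃⟩
  · rintro ⟨a, b, c, rfl⟩
    refine ⟨Fintype.linearCombination R a, Fintype.linearCombination R b,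
      Fintype.linearCombination R c, ?_⟩
    simp only [map_sum_single_tmul, Fintype.linearCombination_apply_single, one_smul]

end RankOne

/-- The seven linear forms of Strassen's algorithm, evaluated at a `2 × 2` family. They are
numbered so that `strassenRotation` gives the forms in the second and third tensor positions. -/
def strassenForm {M : Type*} [AddCommGroup M] (x : Fin 2 → Fin 2 → M) : Fin 7 → M :=
  ![x 0 0 + x 1 1,
    x 1 0 + x 1 1, x 0 0, x 0 1 - x 1 1,
    x 0 0 + x 0 1, x 1 1, x 1 0 - x 0 0]

/-- The permutation `(1 2 3)(4 5 6)` of Strassen's seven summands that is induced by a cyclic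
shift of the tensor positions. -/
def strassenRotation : Fin 7 → Fin 7 :=
  ![0, 2, 3, 1, 5, 6, 4]

theorem sum_tmul_eq_sum_strassenForm {R M₁ M₂ M₃ : Type*} [CommRing R]
    [AddCommGroup M₁] [Module R M₁] [AddCommGroup M₂] [Module R M₂]
    [AddCommGroup M₃] [Module R M₃]
    (x : Fin 2 → Fin 2 → M₁) (y : Fin 2 → Fin 2 → M₂) (z : Fin 2 → Fin 2 → M₃) :
    ∑ i, ∑ j, ∑ k, x i j ⊗ₜ[R] (y j k ⊗ₜ[R] z k i) =
      ∑ l, strassenForm x l ⊗ₜ[R] (strassenForm y (strassenRotation l) ⊗ₜ[R]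
        strassenForm z (strassenRotation (strassenRotation l))) := by
  simp only [Fin.sum_univ_two, Fin.sum_univ_seven, strassenForm, strassenRotation,
    Matrix.cons_val, tmul_add, add_tmul, tmul_sub, sub_tmul]
  abel

theorem strassen_general (R : Type*) [CommRing R] :
    (∃ φ₁ φ₂ φ₃ : (Fin 7 → R) →ₗ[R] Matrix (Fin 2) (Fin 2) R,
      ∑ i : Fin 2, ∑ j : Fin 2, ∑ k : Fin 2, Matrix.single i j (1 : R) ⊗ₜ[R]
          (Matrix.single j k (1 : R) ⊗ₜ[R] Matrix.single k i (1 : R)) =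
        TensorProduct.map φ₁ (TensorProduct.map φ₂ φ₃)
          (∑ l, Pi.single l 1 ⊗ₜ[R] (Pi.single l 1 ⊗ₜ[R] Pi.single l 1))) ∧
    ∃ a b c : Fin 7 → Matrix (Fin 2) (Fin 2) R,
      ∑ i : Fin 2, ∑ j : Fin 2, ∑ k : Fin 2, Matrix.single i j (1 : R) ⊗ₜ[R]
          (Matrix.single j k (1 : R) ⊗ₜ[R] Matrix.single k i (1 : R)) =
        ∑ l, a l ⊗ₜ[R] (b l ⊗ₜ[R] c l) := by
  let e (i j : Fin 2) : Matrix (Fin 2) (Fin 2) R := Matrix.single i j 1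
  have decomposition : ∃ a b c : Fin 7 → Matrix (Fin 2) (Fin 2) R,
      ∑ i, ∑ j, ∑ k, e i j ⊗ₜ[R] (e j k ⊗ₜ[R] e k i) = ∑ l, a l ⊗ₜ[R] (b l ⊗ₜ[R] c l) :=
    ⟨_, _, _, sum_tmul_eq_sum_strassenForm e e e⟩
  exact ⟨(exists_eq_map_sum_single_tmul_iff _).mpr decomposition, decomposition⟩

open TensorProduct in
/-- Strassen: `⟨2,2,2⟩ ≤ ⟨7⟩`, witnessed by a decomposition of
`⟨2,2,2⟩` into a sum of 7 rank-one tensors. -/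
theorem strassen (K : Type) [Field K] :
    IsRestriction K (matMulTensor K 2 2 2) (unitTensor K 7) ∧
    ∃ (a : Fin 7 → Matrix (Fin 2) (Fin 2) K) (b : Fin 7 → Matrix (Fin 2) (Fin 2) K)
      (c : Fin 7 → Matrix (Fin 2) (Fin 2) K),
      matMulTensor K 2 2 2 = ∑ i : Fin 7, a i ⊗ₜ[K] (b i ⊗ₜ[K] c i) :=
  strassen_general K
end

section
/- Let K be a field, n, m, p, r positive integers. If the matrix multiplication tensor ⟨n,m,p⟩ is a restriction of the unit tensor ⟨r⟩, then the square matrix multiplication tensor ⟨nmp, nmp, nmp⟩ is a restriction of the unit tensor ⟨r³⟩. -/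
open TensorProduct

/-!
Cyclically shifting the three tensor factors fixes `⟨r⟩` and turns `⟨n,m,p⟩` into `⟨m,p,n⟩` and
`⟨p,n,m⟩`, so all three are restrictions of `⟨r⟩`. Restriction is compatible with Kronecker
products, and the Kronecker product of these three tensors is `⟨nmp,mpn,pnm⟩`, while that of three
copies of `⟨r⟩` is `⟨r³⟩`.
-/

section Restriction

variable {K : Type} [Field K]
variable {U₁ U₂ U₃ V₁ V₂ V₃ W₁ W₂ W₃ X₁ X₂ X₃ : Type}
variable [AddCommGroup U₁] [Module K U₁] [AddCommGroup U₂] [Module K U₂]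
  [AddCommGroup U₃] [Module K U₃]
variable [AddCommGroup V₁] [Module K V₁] [AddCommGroup V₂] [Module K V₂]
  [AddCommGroup V₃] [Module K V₃]
variable [AddCommGroup W₁] [Module K W₁] [AddCommGroup W₂] [Module K W₂]
  [AddCommGroup W₃] [Module K W₃]
variable [AddCommGroup X₁] [Module K X₁] [AddCommGroup X₂] [Module K X₂]
  [AddCommGroup X₃] [Module K X₃]

theorem IsRestriction.trans {T : U₁ ⊗[K] (U₂ ⊗[K] U₃)} {T' : V₁ ⊗[K] (V₂ ⊗[K] V₃)}
    {T'' : W₁ ⊗[K] (W₂ ⊗[K] W₃)} (h : IsRestriction K T T') (h' : IsRestriction K T' T'') :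
    IsRestriction K T T'' := by
  obtain ⟨φ₁, φ₂, φ₃, rfl⟩ := h
  obtain ⟨ψ₁, ψ₂, ψ₃, rfl⟩ := h'
  exact ⟨φ₁ ∘ₗ ψ₁, φ₂ ∘ₗ ψ₂, φ₃ ∘ₗ ψ₃, by simp only [TensorProduct.map_comp, LinearMap.comp_apply]⟩

variable (K U₁ U₂ U₃) in
/-- The cyclic shift `u₁ ⊗ u₂ ⊗ u₃ ↦ u₂ ⊗ u₃ ⊗ u₁` of an order-3 tensor, expressing the cyclic
symmetry of matrix multiplication. -/
def cyclicShift : U₁ ⊗[K] (U₂ ⊗[K] U₃) ≃ₗ[K] U₂ ⊗[K] (U₃ ⊗[K] U₁) :=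
  TensorProduct.comm K U₁ (U₂ ⊗[K] U₃) ≪≫ₗ TensorProduct.assoc K U₂ U₃ U₁

theorem cyclicShift_tmul (u₁ : U₁) (u₂ : U₂) (u₃ : U₃) :
    cyclicShift K U₁ U₂ U₃ (u₁ ⊗ₜ (u₂ ⊗ₜ u₃)) = u₂ ⊗ₜ (u₃ ⊗ₜ u₁) :=
  rfl

theorem cyclicShift_map (φ₁ : V₁ →ₗ[K] U₁) (φ₂ : V₂ →ₗ[K] U₂) (φ₃ : V₃ →ₗ[K] U₃)
    (T : V₁ ⊗[K] (V₂ ⊗[K] V₃)) :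
    cyclicShift K U₁ U₂ U₃ (TensorProduct.map φ₁ (TensorProduct.map φ₂ φ₃) T) =
      TensorProduct.map φ₂ (TensorProduct.map φ₃ φ₁) (cyclicShift K V₁ V₂ V₃ T) := by
  simp only [cyclicShift, LinearEquiv.trans_apply, TensorProduct.map_comm,
    TensorProduct.map_map_assoc]

theorem IsRestriction.cyclicShift {T : U₁ ⊗[K] (U₂ ⊗[K] U₃)} {T' : V₁ ⊗[K] (V₂ ⊗[K] V₃)}
    (h : IsRestriction K T T') :
    IsRestriction K (cyclicShift K U₁ U₂ U₃ T) (cyclicShift K V₁ V₂ V₃ T') := by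
  obtain ⟨φ₁, φ₂, φ₃, rfl⟩ := h
  exact ⟨φ₂, φ₃, φ₁, cyclicShift_map φ₁ φ₂ φ₃ T'⟩

theorem kron_tmul (u₁ : U₁) (u₂ : U₂) (u₃ : U₃) (w₁ : W₁) (w₂ : W₂) (w₃ : W₃) :
    kron K (u₁ ⊗ₜ (u₂ ⊗ₜ u₃)) (w₁ ⊗ₜ (w₂ ⊗ₜ w₃)) =
      (u₁ ⊗ₜ w₁) ⊗ₜ[K] ((u₂ ⊗ₜ w₂) ⊗ₜ[K] (u₃ ⊗ₜ w₃)) :=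
  rfl

theorem kron_sum_sum {ι κ : Type*} [Fintype ι] [Fintype κ]
    (T : ι → U₁ ⊗[K] (U₂ ⊗[K] U₃)) (S : κ → W₁ ⊗[K] (W₂ ⊗[K] W₃)) :
    kron K (∑ i, T i) (∑ j, S j) = ∑ x : ι × κ, kron K (T x.1) (S x.2) := by
  simp only [kron, TensorProduct.sum_tmul, TensorProduct.tmul_sum, map_sum,
    Fintype.sum_prod_type_right]

theorem kron_map_map (φ₁ : V₁ →ₗ[K] U₁) (φ₂ : V₂ →ₗ[K] U₂) (φ₃ : V₃ →ₗ[K] U₃)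
    (ψ₁ : X₁ →ₗ[K] W₁) (ψ₂ : X₂ →ₗ[K] W₂) (ψ₃ : X₃ →ₗ[K] W₃)
    (T : V₁ ⊗[K] (V₂ ⊗[K] V₃)) (S : X₁ ⊗[K] (X₂ ⊗[K] X₃)) :
    kron K (TensorProduct.map φ₁ (TensorProduct.map φ₂ φ₃) T)
        (TensorProduct.map ψ₁ (TensorProduct.map ψ₂ ψ₃) S) =
      TensorProduct.map (TensorProduct.map φ₁ ψ₁)
        (TensorProduct.map (TensorProduct.map φ₂ ψ₂) (TensorProduct.map φ₃ ψ₃)) (kron K T S) := by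
  have h_outer := LinearMap.congr_fun (TensorProduct.tensorTensorTensorComm_comp_map K φ₁
    (TensorProduct.map φ₂ φ₃) ψ₁ (TensorProduct.map ψ₂ ψ₃)) (T ⊗ₜ S)
  have h_inner := TensorProduct.tensorTensorTensorComm_comp_map K φ₂ φ₃ ψ₂ ψ₃
  simp only [LinearMap.comp_apply, LinearEquiv.coe_coe, TensorProduct.map_tmul] at h_outer
  simp only [kron, h_outer, ← LinearEquiv.coe_coe, TensorProduct.toLinearMap_congr,
    LinearEquiv.refl_toLinearMap, TensorProduct.map_map, h_inner, LinearMap.id_comp,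
    LinearMap.comp_id]

theorem IsRestriction.kron {T : U₁ ⊗[K] (U₂ ⊗[K] U₃)} {T' : V₁ ⊗[K] (V₂ ⊗[K] V₃)}
    {S : W₁ ⊗[K] (W₂ ⊗[K] W₃)} {S' : X₁ ⊗[K] (X₂ ⊗[K] X₃)}
    (hT : IsRestriction K T T') (hS : IsRestriction K S S') :
    IsRestriction K (kron K T S) (kron K T' S') := by
  obtain ⟨φ₁, φ₂, φ₃, rfl⟩ := hT
  obtain ⟨ψ₁, ψ₂, ψ₃, rfl⟩ := hS
  exact ⟨_, _, _, kron_map_map φ₁ φ₂ φ₃ ψ₁ ψ₂ ψ₃ T' S'⟩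

end Restriction

section UnitTensor

variable (K : Type) [Field K]

theorem isRestriction_sum_tmul_unitTensor {U₁ U₂ U₃ : Type} [AddCommGroup U₁] [Module K U₁]
    [AddCommGroup U₂] [Module K U₂] [AddCommGroup U₃] [Module K U₃]
    {ι : Type*} [Fintype ι] {r : ℕ} (e : ι ≃ Fin r)
    (u₁ : ι → U₁) (u₂ : ι → U₂) (u₃ : ι → U₃) :
    IsRestriction K (∑ i, u₁ i ⊗ₜ[K] (u₂ i ⊗ₜ[K] u₃ i)) (unitTensor K r) := by
  refine ⟨Fintype.linearCombination K (u₁ ∘ e.symm), Fintype.linearCombination K (u₂ ∘ e.symm),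
    Fintype.linearCombination K (u₃ ∘ e.symm), ?_⟩
  simp only [unitTensor, map_sum, TensorProduct.map_tmul,
    Fintype.linearCombination_apply_single, one_smul]
  exact (e.symm.sum_comp fun i => u₁ i ⊗ₜ[K] (u₂ i ⊗ₜ[K] u₃ i)).symm

theorem isRestriction_kron_unitTensor (r s : ℕ) :
    IsRestriction K (kron K (unitTensor K r) (unitTensor K s)) (unitTensor K (r * s)) := by
  simp only [unitTensor, kron_sum_sum, kron_tmul]
  exact isRestriction_sum_tmul_unitTensor K finProdFinEquiv _ _ _

theorem cyclicShift_unitTensor (r : ℕ) :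
    cyclicShift K _ _ _ (unitTensor K r) = unitTensor K r := by
  simp only [unitTensor, map_sum, cyclicShift_tmul]

end UnitTensor

section MatMulTensor

variable (K : Type) [Field K]

theorem cyclicShift_matMulTensor (n m p : ℕ) :
    cyclicShift K _ _ _ (matMulTensor K n m p) = matMulTensor K m p n := by
  simp only [matMulTensor, map_sum, cyclicShift_tmul]
  rw [Finset.sum_comm]
  exact Finset.sum_congr rfl fun _ _ => Finset.sum_comm

theorem matMulTensor_eq_sum_prod (n m p : ℕ) :
    matMulTensor K n m p = ∑ x : Fin n × Fin m × Fin p,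
      Matrix.single x.1 x.2.1 (1 : K) ⊗ₜ[K]
        (Matrix.single x.2.1 x.2.2 (1 : K) ⊗ₜ[K] Matrix.single x.2.2 x.1 (1 : K)) := by
  simp only [matMulTensor, Fintype.sum_prod_type]

/-- The Kronecker product of matrices as a linear map on the tensor product, with pairs of
indices flattened lexicographically so that the result is again indexed by `Fin`. -/
def kroneckerFin (n m n' m' : ℕ) :
    Matrix (Fin n) (Fin m) K ⊗[K] Matrix (Fin n') (Fin m') K →ₗ[K]
      Matrix (Fin (n * n')) (Fin (m * m')) K :=
  (kroneckerLinearEquiv (Fin n) (Fin m) (Fin n') (Fin m') K ≪≫ₗ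
    Matrix.reindexLinearEquiv K K finProdFinEquiv finProdFinEquiv).toLinearMap

theorem kroneckerFin_single_tmul_single {n m n' m' : ℕ} (i : Fin n) (j : Fin m) (i' : Fin n')
    (j' : Fin m') :
    kroneckerFin K n m n' m' (Matrix.single i j 1 ⊗ₜ Matrix.single i' j' 1) =
      Matrix.single (finProdFinEquiv (i, i')) (finProdFinEquiv (j, j')) 1 := by
  simp [kroneckerFin, Matrix.single_kronecker_single]

theorem map_kroneckerFin_kron_matMulTensor (n m p n' m' p' : ℕ) :
    TensorProduct.map (kroneckerFin K n m n' m')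
        (TensorProduct.map (kroneckerFin K m p m' p') (kroneckerFin K p n p' n'))
        (kron K (matMulTensor K n m p) (matMulTensor K n' m' p')) =
      matMulTensor K (n * n') (m * m') (p * p') := by
  let e : (Fin n × Fin m × Fin p) × (Fin n' × Fin m' × Fin p') ≃
      Fin (n * n') × Fin (m * m') × Fin (p * p') :=
    (Equiv.prodProdProdComm _ _ _ _).trans <| finProdFinEquiv.prodCongr <|
      (Equiv.prodProdProdComm _ _ _ _).trans <| finProdFinEquiv.prodCongr finProdFinEquiv
  simp only [matMulTensor_eq_sum_prod, kron_sum_sum, kron_tmul, map_sum, TensorProduct.map_tmul,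
    kroneckerFin_single_tmul_single]
  exact Fintype.sum_equiv e _ _ fun _ => rfl

theorem isRestriction_matMulTensor_kron (n m p n' m' p' : ℕ) :
    IsRestriction K (matMulTensor K (n * n') (m * m') (p * p'))
      (kron K (matMulTensor K n m p) (matMulTensor K n' m' p')) :=
  ⟨_, _, _, (map_kroneckerFin_kron_matMulTensor K n m p n' m' p').symm⟩

variable {K}

theorem IsRestriction.matMulTensor_cyclicShift {n m p r : ℕ}
    (h : IsRestriction K (matMulTensor K n m p) (unitTensor K r)) :
    IsRestriction K (matMulTensor K m p n) (unitTensor K r) := by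
  simpa only [cyclicShift_matMulTensor, cyclicShift_unitTensor] using h.cyclicShift

theorem IsRestriction.matMulTensor_mul {n m p r n' m' p' s : ℕ}
    (h : IsRestriction K (matMulTensor K n m p) (unitTensor K r))
    (h' : IsRestriction K (matMulTensor K n' m' p') (unitTensor K s)) :
    IsRestriction K (matMulTensor K (n * n') (m * m') (p * p')) (unitTensor K (r * s)) :=
  (isRestriction_matMulTensor_kron K n m p n' m' p').trans <|
    (h.kron h').trans (isRestriction_kron_unitTensor K r s)

end MatMulTensor

/-- if `⟨n,m,p⟩ ≤ ⟨r⟩` then `⟨nmp,nmp,nmp⟩ ≤ ⟨r³⟩`. -/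
theorem isRestriction_cube (K : Type) [Field K] (n m p r : ℕ)
    (hn : 0 < n) (hm : 0 < m) (hp : 0 < p) (hr : 0 < r)
    (h : IsRestriction K (matMulTensor K n m p) (unitTensor K r)) :
    IsRestriction K (matMulTensor K (n * m * p) (n * m * p) (n * m * p))
      (unitTensor K (r ^ 3)) := by
  have h_mpn : IsRestriction K (matMulTensor K m p n) (unitTensor K r) :=
    h.matMulTensor_cyclicShift
  have h_pnm : IsRestriction K (matMulTensor K p n m) (unitTensor K r) :=
    h_mpn.matMulTensor_cyclicShift
  have h_prod : IsRestriction K (matMulTensor K (n * m * p) (m * p * n) (p * n * m))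
      (unitTensor K (r * r * r)) :=
    (h.matMulTensor_mul h_mpn).matMulTensor_mul h_pnm
  have mul_mpn : m * p * n = n * m * p := by ring
  have mul_pnm : p * n * m = n * m * p := by ring
  rwa [mul_mpn, mul_pnm, ← pow_three'] at h_prod
end
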